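/- arXiv:1801.08572 — 2 statements merged into one kernel-verified Lean document; each statement's English description precedes it below -/
import Mathlib

section
/- Let U be an N_o × N_w complex matrix with orthonormal columns (U*U = I), partitioned as U = [U_f; U_r] where U_f has N_f rows. Let Ψ be an N_g × N_o matrix with orthonormal columns, P_w = Ψ U U* Ψ*, and P_f = Ψ [[I_{N_f}, 0],[0,0]] Ψ*. Then P_w P_f = P_f if and only if U_f U_f* = I_{N_f}. -/
open Matrix

/-- With `U` having orthonormal columns, partitioned into frozen rows `U_f`
and remaining rows `U_r`, and `Ψ` with orthonormal columns, the projector condition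
`P_w P_f = P_f` holds iff `U_f U_fᴴ = I`. -/
theorem stmt0 (ng nf nr nw : ℕ)
    (Ψ : Matrix (Fin ng) (Fin nf ⊕ Fin nr) ℂ)
    (U : Matrix (Fin nf ⊕ Fin nr) (Fin nw) ℂ)
    (hΨ : Ψᴴ * Ψ = 1) (hU : Uᴴ * U = 1)
    (Uf : Matrix (Fin nf) (Fin nw) ℂ)
    (hUf : Uf = U.submatrix Sum.inl id)
    (Pw Pf : Matrix (Fin ng) (Fin ng) ℂ)
    (hPw : Pw = Ψ * (U * Uᴴ) * Ψᴴ)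
    (hPf : Pf = Ψ * (fromBlocks (1 : Matrix (Fin nf) (Fin nf) ℂ) 0 0
      (0 : Matrix (Fin nr) (Fin nr) ℂ)) * Ψᴴ) :
    Pw * Pf = Pf ↔ Uf * Ufᴴ = 1 := by
  set Ur : Matrix (Fin nr) (Fin nw) ℂ := U.submatrix Sum.inr id with hUr
  have hUeq : U = fromRows Uf Ur := by
    rw [hUf, hUr]
    ext i j
    rcases i with i | i <;> rfl
  have hsum : Ufᴴ * Uf + Urᴴ * Ur = 1 := by
    rw [← hU, hUeq, conjTranspose_fromRows_eq_fromCols_conjTranspose, fromCols_mul_fromRows]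
  have hUU : U * Uᴴ = fromBlocks (Uf * Ufᴴ) (Uf * Urᴴ) (Ur * Ufᴴ) (Ur * Urᴴ) := by
    rw [hUeq, conjTranspose_fromRows_eq_fromCols_conjTranspose, fromRows_mul_fromCols]
  set E : Matrix (Fin nf ⊕ Fin nr) (Fin nf ⊕ Fin nr) ℂ := fromBlocks 1 0 0 0 with hE
  have hprod : Pw * Pf = Ψ * (U * Uᴴ * E) * Ψᴴ := by
    calc Pw * Pf = Ψ * (U * Uᴴ) * (Ψᴴ * Ψ) * E * Ψᴴ := by
          rw [hPw, hPf]; simp only [Matrix.mul_assoc]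
      _ = _ := by rw [hΨ]; simp only [Matrix.mul_assoc, Matrix.one_mul]
  have hcancel : ∀ A : Matrix (Fin nf ⊕ Fin nr) (Fin nf ⊕ Fin nr) ℂ,
      Ψᴴ * (Ψ * A * Ψᴴ) * Ψ = A := by
    intro A
    calc Ψᴴ * (Ψ * A * Ψᴴ) * Ψ = (Ψᴴ * Ψ) * A * (Ψᴴ * Ψ) := by
          simp only [Matrix.mul_assoc]
      _ = A := by rw [hΨ, Matrix.one_mul, Matrix.mul_one]
  have hUE : U * Uᴴ * E = fromBlocks (Uf * Ufᴴ) 0 (Ur * Ufᴴ) 0 := by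
    rw [hUU, hE, fromBlocks_multiply]; simp
  constructor
  · intro h
    rw [hprod, hPf] at h
    have h2 : U * Uᴴ * E = E := by
      rw [← hcancel (U * Uᴴ * E), h, hcancel]
    rw [hUE, hE] at h2
    exact (fromBlocks_inj.mp h2).1
  · intro h
    have h0 : (Ur * Ufᴴ)ᴴ * (Ur * Ufᴴ) = 0 := by
      have h1 : Uf * (Ufᴴ * Uf + Urᴴ * Ur) * Ufᴴ = 1 := by
        rw [hsum, Matrix.mul_one, h]
      have h2 : Uf * (Ufᴴ * Uf + Urᴴ * Ur) * Ufᴴ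
          = (Uf * Ufᴴ) * (Uf * Ufᴴ) + (Ur * Ufᴴ)ᴴ * (Ur * Ufᴴ) := by
        simp only [conjTranspose_mul, conjTranspose_conjTranspose, Matrix.mul_add,
          Matrix.add_mul, Matrix.mul_assoc]
      rw [h2, h, Matrix.mul_one] at h1
      exact add_eq_left.mp h1
    have h3 : Ur * Ufᴴ = 0 := by
      open ComplexOrder in exact conjTranspose_mul_self_eq_zero.mp h0
    rw [hprod, hPf, hUE, h, h3]
end

section
/- Let U be an N_o × N_w complex matrix with U*U = I_{N_w}, partitioned as U = [U_f; U_r] with U_f of size N_f × N_w satisfying U_f U_f* = I_{N_f}. Then there exist a unitary N_w × N_w matrix X and an (N_o − N_f) × (N_w − N_f) matrix Y with Y*Y = I such that U = [[I_{N_f}, 0],[0, Y]] X. -/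
open Matrix

/-- If `U` has orthonormal columns and its frozen block satisfies
`U_f U_fᴴ = I`, then `U` factors as `[[I,0],[0,Y]] X` with `X` unitary and
`Y` having orthonormal columns.  Here `N_o = nf + nr` and `N_w = nf + m`. -/
theorem stmt2 (nf nr m : ℕ)
    (U : Matrix (Fin nf ⊕ Fin nr) (Fin nf ⊕ Fin m) ℂ)
    (hU : Uᴴ * U = 1)
    (hUf : (U.submatrix Sum.inl id) * (U.submatrix Sum.inl id)ᴴ = 1) :
    ∃ X : Matrix (Fin nf ⊕ Fin m) (Fin nf ⊕ Fin m) ℂ,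
      X ∈ Matrix.unitaryGroup (Fin nf ⊕ Fin m) ℂ ∧
      ∃ Y : Matrix (Fin nr) (Fin m) ℂ, Yᴴ * Y = 1 ∧
        U = fromBlocks (1 : Matrix (Fin nf) (Fin nf) ℂ) 0 0 Y * X := by
  classical
  let v : (Fin nf ⊕ Fin m) → EuclideanSpace ℂ (Fin nf ⊕ Fin m) := fun i =>
    Sum.elim (fun a => WithLp.toLp 2 (fun j => U (Sum.inl a) j)) (fun _ => 0) i
  have hv : Orthonormal ℂ ((Set.range Sum.inl).domRestrict v) := by
    rw [orthonormal_iff_ite]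
    rintro ⟨_, a, rfl⟩ ⟨_, b, rfl⟩
    have h := congrFun (congrFun hUf b) a
    simp only [Matrix.mul_apply, Matrix.submatrix_apply, Matrix.conjTranspose_apply,
      Matrix.one_apply, id] at h
    have e : ∀ c : Fin nf, (Set.range Sum.inl).domRestrict v ⟨Sum.inl c, c, rfl⟩ =
        WithLp.toLp 2 (fun j => U (Sum.inl c) j) := fun c => rfl
    rw [e, e, PiLp.inner_apply]
    simp only [RCLike.inner_apply, starRingEnd_apply]
    rw [h]
    by_cases hab : a = b
    · subst hab; simp
    · have hba : b ≠ a := fun h => hab h.symm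
      rw [if_neg hba, if_neg]
      intro h
      exact hab (Sum.inl.inj (congrArg Subtype.val h))
  obtain ⟨b, hb⟩ := hv.exists_orthonormalBasis_extension_of_card_eq (by simp)
  let X : Matrix (Fin nf ⊕ Fin m) (Fin nf ⊕ Fin m) ℂ := Matrix.of fun i j => b i j
  have hX : X * Xᴴ = 1 := by
    ext i k
    have h := orthonormal_iff_ite.1 b.orthonormal k i
    simp only [PiLp.inner_apply, RCLike.inner_apply, starRingEnd_apply] at h
    simp only [Matrix.mul_apply, Matrix.conjTranspose_apply, Matrix.one_apply, X, Matrix.of_apply]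
    rw [h]
    simp only [eq_comm]
  have hX2 : Xᴴ * X = 1 := mul_eq_one_comm.1 hX
  have hXU : ∀ a j, X (Sum.inl a) j = U (Sum.inl a) j := by
    intro a j
    simp [X, hb (Sum.inl a) ⟨a, rfl⟩, v]
  have hW : (U * Xᴴ)ᴴ * (U * Xᴴ) = 1 := by
    rw [Matrix.conjTranspose_mul, Matrix.conjTranspose_conjTranspose, Matrix.mul_assoc,
      ← Matrix.mul_assoc Uᴴ, hU, Matrix.one_mul, hX]
  have htop : ∀ a j, (U * Xᴴ) (Sum.inl a) j = (1 : Matrix (Fin nf ⊕ Fin m) (Fin nf ⊕ Fin m) ℂ) (Sum.inl a) j := by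
    intro a j
    rw [← hX]
    simp only [Matrix.mul_apply, hXU]
  have h11 : (U * Xᴴ).toBlocks₁₁ = 1 := by
    ext a j
    simp [Matrix.toBlocks₁₁, htop, Matrix.one_apply]
  have h12 : (U * Xᴴ).toBlocks₁₂ = 0 := by
    ext a j
    simp [Matrix.toBlocks₁₂, htop, Matrix.one_apply]
  have hUX : U = (U * Xᴴ) * X := by rw [Matrix.mul_assoc, hX2, Matrix.mul_one]
  have hbl := Matrix.fromBlocks_toBlocks (U * Xᴴ)
  rw [h11, h12] at hbl
  rw [← hbl, Matrix.fromBlocks_conjTranspose, Matrix.fromBlocks_multiply,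
    ← Matrix.fromBlocks_one, Matrix.fromBlocks_inj] at hW
  obtain ⟨w1, -, -, w4⟩ := hW
  have hC : (U * Xᴴ).toBlocks₂₁ = 0 := by
    open scoped ComplexOrder in
      apply Matrix.conjTranspose_mul_self_eq_zero.1
    simpa using w1
  rw [hC] at hbl
  refine ⟨X, Matrix.mem_unitaryGroup_iff.2 hX, (U * Xᴴ).toBlocks₂₂, by simpa using w4, ?_⟩
  rw [hbl]
  exact hUX
end
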